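/- Every finite simple connected 4-chordal graph is distance preserving. That is, if G contains no induced cycle of length 5 or greater, then for every i with 1 ≤ i ≤ |V(G)| the graph G has an isometric subgraph on exactly i vertices. -/

import Mathlib

open SimpleGraph

/-- `G[A]` is an isometric subgraph of `G`: it is connected and distances
within `G[A]` agree with distances in `G`. -/
def IsIsomSub {V : Type*} (G : SimpleGraph V) (A : Set V) : Prop :=
  (G.induce A).Connected ∧
    ∀ u v : A, (G.induce A).dist u v = G.dist (u : V) (v : V)

/-- `G` is distance preserving: it has an isometric subgraph of every order
`1 ≤ i ≤ |V(G)|`. -/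
def DistPres {V : Type*} [Fintype V] (G : SimpleGraph V) : Prop :=
  ∀ i : ℕ, 1 ≤ i → i ≤ Fintype.card V →
    ∃ A : Set V, A.ncard = i ∧ IsIsomSub G A

/-!
Vertices are deleted one at a time, each remaining graph being isometric in the previous one. The
vertex to delete is an *avoidable* one: any two nonadjacent neighbors `x`, `y` of it are joined by
a path whose interior avoids its closed neighborhood. A shortest such path closes up through the
vertex to an induced cycle, which in a 4-chordal graph has length 4, so `x` and `y` have another
common neighbor, through which geodesics can be rerouted.

Every finite graph has an avoidable vertex. If it is not complete, choose `u` and a component `C` of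
the graph on the nonneighbors of `u` with `C` inclusion-minimal, and then `w ∈ C` whose closed
neighborhood is inclusion-minimal, i.e. whose set of nonneighbors is maximal. Minimality of `C`
forces the nonneighbors of `w` in `C` into the component of `u` in the graph on the nonneighbors of
`w`, and the choice of `w` in `C` gives each of `x` and `y` a neighbor in that component.
-/

section

variable {V : Type*} {G : SimpleGraph V} {s t : Set V} {a b c u v w x y z : V} {m : ℕ}

lemma dist_le_dist_add_one_of_adj (w : V) (h : G.Adj u v) : G.dist u w ≤ G.dist v w + 1 := by
  rw [G.dist_comm (u := u), G.dist_comm (u := v)]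
  have := h.diff_dist_adj (u := w)
  lia

lemma dist_getVert_of_length_eq_dist {p : G.Walk u v} (hp : p.length = G.dist u v) {i j : ℕ}
    (hij : i ≤ j) (hj : j ≤ p.length) : G.dist (p.getVert i) (p.getVert j) = j - i := by
  have hsub := ((p.take j).isSubwalk_drop i).trans (p.isSubwalk_take j)
  have hlen := length_eq_dist_of_subwalk hp hsub
  rw [Walk.drop_length, Walk.take_length, Walk.take_getVert, min_eq_left hj,
    min_eq_right hij] at hlen
  exact hlen.symm

lemma exists_adj_dist_add_one_eq (h : G.Reachable u v) (hne : u ≠ v) :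
    ∃ w, G.Adj u w ∧ G.dist w v + 1 = G.dist u v := by
  obtain ⟨p, hp⟩ := h.exists_walk_length_eq_dist
  have hpos : 0 < p.length := hp ▸ h.pos_dist_of_ne hne
  have hdist := dist_getVert_of_length_eq_dist hp hpos le_rfl
  rw [p.getVert_length] at hdist
  exact ⟨p.getVert 1, by simpa using p.adj_getVert_succ hpos, by lia⟩

lemma exists_induce_walk_length_eq_dist {A : Set V}
    (h : ∀ u ∈ A, ∀ v ∈ A, u ≠ v → ∃ w ∈ A, G.Adj u w ∧ G.dist w v + 1 = G.dist u v) (u v : A) :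
    ∃ p : (G.induce A).Walk u v, p.length = G.dist (u : V) v := by
  induction hn : G.dist (u : V) v generalizing u with
  | zero =>
    obtain rfl : u = v := by
      by_contra hne
      obtain ⟨w, -, -, hd⟩ := h u u.2 v v.2 (Subtype.coe_ne_coe.2 hne)
      lia
    exact ⟨.nil, rfl⟩
  | succ n ih =>
    have hne : (u : V) ≠ v := fun huv ↦ by simp [huv] at hn
    obtain ⟨w, hw, huw, hd⟩ := h u u.2 v v.2 hne
    obtain ⟨p, hp⟩ := ih ⟨w, hw⟩ (by lia)
    exact ⟨.cons (induce_adj.2 huw) p, by simp [hp]⟩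

/- Since `dist` is `0` between different components, the `+ 1` in the distance condition forces the
points of `A` to be joined in `G`. -/
lemma isIsomSub_iff {A : Set V} : IsIsomSub G A ↔ A.Nonempty ∧
    ∀ u ∈ A, ∀ v ∈ A, u ≠ v → ∃ w ∈ A, G.Adj u w ∧ G.dist w v + 1 = G.dist u v := by
  constructor
  · rintro ⟨hconn, hdist⟩
    refine ⟨Set.nonempty_coe_sort.1 hconn.nonempty, fun u hu v hv hne ↦ ?_⟩
    obtain ⟨w, huw, hd⟩ := exists_adj_dist_add_one_eq (hconn ⟨u, hu⟩ ⟨v, hv⟩)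
      (Subtype.coe_ne_coe.1 hne)
    exact ⟨w, w.2, huw, by simpa only [hdist] using hd⟩
  · rintro ⟨hne, h⟩
    have hconn : (G.induce A).Connected :=
      { preconnected := fun u v ↦ ⟨(exists_induce_walk_length_eq_dist h u v).choose⟩
        nonempty := hne.to_subtype }
    refine ⟨hconn, fun u v ↦ le_antisymm ?_ ?_⟩
    · obtain ⟨p, hp⟩ := exists_induce_walk_length_eq_dist h u v
      exact hp ▸ dist_le p
    · obtain ⟨p, hp⟩ := hconn.exists_walk_length_eq_dist u v
      rw [← hp, ← p.length_map (Embedding.induce A).toHom]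
      exact dist_le _

lemma isIsomSub_univ (hG : G.Connected) : IsIsomSub G Set.univ :=
  isIsomSub_iff.2 ⟨Set.nonempty_iff_univ_nonempty.1 hG.nonempty, fun u _ v _ hne ↦
    (exists_adj_dist_add_one_eq (hG u v) hne).imp fun _ h ↦ ⟨trivial, h⟩⟩

lemma IsIsomSub.sdiff_singleton {A : Set V} (hA : IsIsomSub G A) {v : A}
    (hne : (A \ {(v : V)}).Nonempty)
    (hv : ∀ ⦃x y : A⦄, (G.induce A).Adj v x → (G.induce A).Adj v y → (G.induce A)ᶜ.Adj x y →
      ∃ c ∈ (G.induce A).commonNeighbors x y, c ≠ v) :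
    IsIsomSub G (A \ {(v : V)}) := by
  have hstep := (isIsomSub_iff.1 hA).2
  refine isIsomSub_iff.2 ⟨hne, ?_⟩
  rintro a ⟨ha, -⟩ b ⟨hb, hbv⟩ hab
  obtain ⟨w, hw, haw, hdw⟩ := hstep a ha b hb hab
  obtain hwv | rfl := ne_or_eq w v
  · exact ⟨w, ⟨hw, hwv⟩, haw, hdw⟩
  obtain ⟨w', hw', hvw', hdw'⟩ := hstep v v.2 b hb (Ne.symm hbv)
  have hnadj : (G.induce A)ᶜ.Adj ⟨a, ha⟩ ⟨w', hw'⟩ := by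
    refine ⟨fun h ↦ ?_, fun h ↦ ?_⟩
    · obtain rfl : a = w' := congrArg Subtype.val h
      lia
    · have := dist_le_dist_add_one_of_adj b (induce_adj.1 h)
      lia
  obtain ⟨c, ⟨hac, hw'c⟩, hcv⟩ := hv (x := ⟨a, ha⟩) (y := ⟨w', hw'⟩) haw.symm hvw' hnadj
  refine ⟨c, ⟨c.2, Subtype.coe_ne_coe.2 hcv⟩, hac, ?_⟩
  have hdac := dist_le_dist_add_one_of_adj b (induce_adj.1 hac)
  have hdcw' := dist_le_dist_add_one_of_adj b (induce_adj.1 hw'c.symm)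
  lia

/-- Connectedness inside an induced subgraph: some walk of `G` from `a` to `b` has all its vertices,
endpoints included, in `s`. -/
def ReachableIn (G : SimpleGraph V) (s : Set V) (a b : V) : Prop :=
  ∃ (ha : a ∈ s) (hb : b ∈ s), (G.induce s).Reachable ⟨a, ha⟩ ⟨b, hb⟩

namespace ReachableIn

lemma left_mem (h : ReachableIn G s a b) : a ∈ s := h.1

lemma right_mem (h : ReachableIn G s a b) : b ∈ s := h.2.1

lemma refl (ha : a ∈ s) : ReachableIn G s a a := ⟨ha, ha, .rfl⟩

lemma symm (h : ReachableIn G s a b) : ReachableIn G s b a :=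
  ⟨h.2.1, h.1, h.2.2.symm⟩

lemma trans (hab : ReachableIn G s a b) (hbc : ReachableIn G s b c) : ReachableIn G s a c :=
  ⟨hab.1, hbc.2.1, hab.2.2.trans hbc.2.2⟩

lemma of_adj (ha : a ∈ s) (hb : b ∈ s) (hab : G.Adj a b) : ReachableIn G s a b :=
  ⟨ha, hb, Adj.reachable (induce_adj.2 hab)⟩

lemma of_forall_mem (h : ReachableIn G s a b) (hst : ∀ c, ReachableIn G s a c → c ∈ t) :
    ReachableIn G t a b := by
  classical
  obtain ⟨ha, hb, ⟨p⟩⟩ := h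
  have hp : ∀ c ∈ (p.map (Embedding.induce s).toHom).support, c ∈ t := by
    intro c hc
    obtain ⟨d, hd, rfl⟩ := List.mem_map.1 (Walk.support_map .. ▸ hc)
    exact hst d ⟨ha, d.2, ⟨p.takeUntil d hd⟩⟩
  exact ⟨_, _, ⟨(p.map (Embedding.induce s).toHom).induce t hp⟩⟩

lemma mono (hst : s ⊆ t) (h : ReachableIn G s a b) : ReachableIn G t a b :=
  h.of_forall_mem fun _ hc ↦ hst hc.right_mem

end ReachableIn

/-- An avoidable vertex (Beisegel, Chudnovsky, Gurvich, Milanič and Servatius): any two nonadjacent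
neighbors of `v` are joined by a path whose interior lies outside the closed neighborhood of `v`.
Here `Gᶜ.neighborSet v` is the complement of that closed neighborhood. -/
def IsAvoidable (G : SimpleGraph V) (v : V) : Prop :=
  ∀ ⦃x y⦄, G.Adj v x → G.Adj v y → Gᶜ.Adj x y → ReachableIn G ({x, y} ∪ Gᶜ.neighborSet v) x y

lemma adj_of_not_compl_adj (hne : a ≠ b) (h : ¬ Gᶜ.Adj a b) : G.Adj a b := by
  simpa [hne] using h

/-- The vertex set of the component of `z` in the graph induced on the nonneighbors of `u`; it is
empty when `z` is itself not such a nonneighbor. -/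
def nonneighborComponent (G : SimpleGraph V) (u z : V) : Set V :=
  {b | ReachableIn G (Gᶜ.neighborSet u) z b}

lemma compl_adj_of_mem_nonneighborComponent (h : a ∈ nonneighborComponent G u z) : Gᶜ.Adj u a :=
  ReachableIn.right_mem (s := Gᶜ.neighborSet u) h

lemma mem_nonneighborComponent_self (h : Gᶜ.Adj u z) : z ∈ nonneighborComponent G u z :=
  ReachableIn.refl h

lemma mem_nonneighborComponent_of_adj (ha : a ∈ nonneighborComponent G u z) (hub : Gᶜ.Adj u b)
    (hab : G.Adj a b) : b ∈ nonneighborComponent G u z :=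
  ReachableIn.trans ha (.of_adj ha.right_mem hub hab)

lemma mem_nonneighborComponent_of_not_compl_adj (hwu : Gᶜ.Adj w u) (hwa : Gᶜ.Adj w a)
    (hua : ¬ Gᶜ.Adj u a) : a ∈ nonneighborComponent G w u := by
  obtain rfl | hne := eq_or_ne u a
  · exact mem_nonneighborComponent_self hwu
  · exact mem_nonneighborComponent_of_adj (mem_nonneighborComponent_self hwu) hwa
      (adj_of_not_compl_adj hne hua)

lemma mem_nonneighborComponent_of_minimalFor
    (hmin : MinimalFor (fun q : V × V ↦ Gᶜ.Adj q.1 q.2)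
      (fun q ↦ nonneighborComponent G q.1 q.2) (u, z))
    (hw : w ∈ nonneighborComponent G u z) (ha : a ∈ nonneighborComponent G u z)
    (hwa : Gᶜ.Adj w a) : a ∈ nonneighborComponent G w u := by
  have hwu : Gᶜ.Adj w u := (compl_adj_of_mem_nonneighborComponent hw).symm
  by_contra hau
  have hnonneighbor : ∀ b ∈ nonneighborComponent G w a, Gᶜ.Adj u b := fun b hab ↦ by
    by_contra hub
    exact hau ((mem_nonneighborComponent_of_not_compl_adj hwu hab.right_mem hub).trans hab.symm)
  have hsub : nonneighborComponent G w a ⊆ nonneighborComponent G u z :=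
    fun b hab ↦ ReachableIn.trans ha (hab.of_forall_mem hnonneighbor)
  have hww : w ∈ nonneighborComponent G w a := hmin.2 (j := (w, a)) hwa hsub hw
  exact (compl_adj_of_mem_nonneighborComponent hww).ne rfl

lemma exists_adj_mem_nonneighborComponent
    (hmin : MinimalFor (fun q : V × V ↦ Gᶜ.Adj q.1 q.2)
      (fun q ↦ nonneighborComponent G q.1 q.2) (u, z))
    (hmax : MaximalFor (· ∈ nonneighborComponent G u z) Gᶜ.neighborSet w)
    (hx : G.Adj w x) (hy : G.Adj w y) (hxy : Gᶜ.Adj x y) :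
    ∃ a ∈ nonneighborComponent G w u, G.Adj x a := by
  have hwu : Gᶜ.Adj w u := (compl_adj_of_mem_nonneighborComponent hmax.1).symm
  by_cases hux : Gᶜ.Adj u x
  · have hxC : x ∈ nonneighborComponent G u z := mem_nonneighborComponent_of_adj hmax.1 hux hx
    obtain ⟨a, hwa, hxa⟩ : ∃ a, Gᶜ.Adj w a ∧ ¬ Gᶜ.Adj x a := by
      by_contra! hsub
      exact (hmax.2 hxC hsub hxy).2 hy
    have hadj : G.Adj x a := adj_of_not_compl_adj (by rintro rfl; exact hwa.2 hx) hxa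
    refine ⟨a, ?_, hadj⟩
    by_cases hua : Gᶜ.Adj u a
    · exact mem_nonneighborComponent_of_minimalFor hmin hmax.1
        (mem_nonneighborComponent_of_adj hxC hua hadj) hwa
    · exact mem_nonneighborComponent_of_not_compl_adj hwu hwa hua
  · exact ⟨u, mem_nonneighborComponent_self hwu,
      (adj_of_not_compl_adj (by rintro rfl; exact hwu.2 hx) hux).symm⟩

theorem exists_isAvoidable [Finite V] [Nonempty V] (G : SimpleGraph V) : ∃ v, IsAvoidable G v := by
  by_cases hcompl : ∃ q : V × V, Gᶜ.Adj q.1 q.2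
  · obtain ⟨⟨u, z⟩, hmin⟩ := exists_minimalFor_of_wellFoundedLT _
      (fun q : V × V ↦ nonneighborComponent G q.1 q.2) hcompl
    obtain ⟨w, hmax⟩ := exists_maximalFor_of_wellFoundedGT (· ∈ nonneighborComponent G u z)
      Gᶜ.neighborSet ⟨z, mem_nonneighborComponent_self hmin.1⟩
    refine ⟨w, fun x y hx hy hxy ↦ ?_⟩
    obtain ⟨a, hua, hxa⟩ := exists_adj_mem_nonneighborComponent hmin hmax hx hy hxy
    obtain ⟨b, hub, hyb⟩ := exists_adj_mem_nonneighborComponent hmin hmax hy hx hxy.symm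
    have hab : ReachableIn G ({x, y} ∪ Gᶜ.neighborSet w) a b :=
      (hua.symm.trans hub).mono Set.subset_union_right
    have hxa' := ReachableIn.of_adj (.inl (.inl rfl)) hab.left_mem hxa
    have hby := ReachableIn.of_adj hab.right_mem (.inl (.inr rfl)) hyb.symm
    exact hxa'.trans (hab.trans hby)
  · obtain ⟨v⟩ := ‹Nonempty V›
    exact ⟨v, fun x y _ _ hxy ↦ (hcompl ⟨(x, y), hxy⟩).elim⟩

lemma exists_pathGraph_embedding (h : G.Reachable x y) :
    ∃ f : pathGraph (G.dist x y + 1) ↪g G, f 0 = x ∧ f (Fin.last _) = y := by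
  obtain ⟨p, hp⟩ := h.exists_walk_length_eq_dist
  have hinj : Function.Injective fun i : Fin (G.dist x y + 1) ↦ p.getVert i := by
    intro i j hij
    wlog hle : i ≤ j generalizing i j
    · exact (this hij.symm (le_of_not_ge hle)).symm
    have := dist_getVert_of_length_eq_dist hp hle (by lia)
    rw [show p.getVert i = p.getVert j from hij, dist_self] at this
    lia
  have hadj (i j : Fin (G.dist x y + 1)) :
      G.Adj (p.getVert i) (p.getVert j) ↔ (pathGraph (G.dist x y + 1)).Adj i j := by
    wlog hle : i ≤ j generalizing i j
    · rw [G.adj_comm, this j i (le_of_not_ge hle), adj_comm]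
    rw [← dist_eq_one_iff_adj, dist_getVert_of_length_eq_dist hp hle (by lia), pathGraph_adj]
    lia
  exact ⟨⟨⟨_, hinj⟩, hadj _ _⟩, p.getVert_zero, p.getVert_of_length_le hp.le⟩

lemma cycleGraph_adj_iff_eq_add_one {i j : Fin (m + 2)} :
    (cycleGraph (m + 2)).Adj i j ↔ i = j + 1 ∨ j = i + 1 := by
  rw [cycleGraph_adj, sub_eq_iff_eq_add', sub_eq_iff_eq_add', add_comm j, add_comm i]

lemma cycleGraph_adj_zero_succ {i : Fin (m + 1)} :
    (cycleGraph (m + 2)).Adj 0 i.succ ↔ i = 0 ∨ i = Fin.last m := by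
  simp only [cycleGraph_adj_iff_eq_add_one, Fin.ext_iff, Fin.val_add_one, Fin.val_succ,
    Fin.val_zero, Fin.val_last]
  grind

lemma cycleGraph_adj_succ_succ {i j : Fin (m + 1)} :
    (cycleGraph (m + 2)).Adj i.succ j.succ ↔ (pathGraph (m + 1)).Adj i j := by
  simp only [cycleGraph_adj_iff_eq_add_one, pathGraph_adj, Fin.ext_iff, Fin.val_add_one,
    Fin.val_succ, Fin.val_last]
  grind

lemma cycleGraph_isIndContained_of_pathGraph_embedding (f : pathGraph (m + 1) ↪g G)
    (hv : ∀ i, f i ≠ v) (hadj : ∀ i, G.Adj v (f i) ↔ i = 0 ∨ i = Fin.last m) :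
    cycleGraph (m + 2) ⊴ G := by
  have hinj : Function.Injective (Fin.cons v f : Fin (m + 2) → V) :=
    Fin.cons_injective_iff.2 ⟨fun ⟨i, hi⟩ ↦ hv i hi, f.injective⟩
  refine ⟨⟨⟨_, hinj⟩, fun {i j} ↦ ?_⟩⟩
  cases i using Fin.cases <;> cases j using Fin.cases
  · simp
  · simp [hadj, cycleGraph_adj_zero_succ]
  · simp [adj_comm _ _ v, adj_comm _ _ (0 : Fin (m + 2)), hadj, cycleGraph_adj_zero_succ]
  · simp [cycleGraph_adj_succ_succ]

lemma cycleGraph_isIndContained_of_reachable_induce {x y : s} (h : (G.induce s).Reachable x y)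
    (hv : v ∉ s) (hadj : ∀ a : s, G.Adj v a ↔ a = x ∨ a = y) :
    cycleGraph ((G.induce s).dist x y + 2) ⊴ G := by
  obtain ⟨f, hf₀, hf₁⟩ := exists_pathGraph_embedding h
  refine cycleGraph_isIndContained_of_pathGraph_embedding (v := v)
    (f.trans (Embedding.induce s)) (fun i hi ↦ hv (hi ▸ (f i).2)) fun i ↦ ?_
  rw [← f.injective.eq_iff (b := 0), ← f.injective.eq_iff (b := Fin.last _), hf₀, hf₁]
  exact hadj (f i)

/-- `4`-chordality: no induced cycle has length greater than `4`. -/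
def IsFourChordal (G : SimpleGraph V) : Prop :=
  ∀ n, 5 ≤ n → ¬ cycleGraph n ⊴ G

namespace IsFourChordal

lemma induce (hG : IsFourChordal G) (s : Set V) : IsFourChordal (G.induce s) :=
  fun n hn h ↦ hG n hn (h.trans (Embedding.induce s).isIndContained)

lemma exists_mem_commonNeighbors (hG : IsFourChordal G) (hv : IsAvoidable G v)
    (hx : G.Adj v x) (hy : G.Adj v y) (hxy : Gᶜ.Adj x y) :
    ∃ c ∈ G.commonNeighbors x y, c ≠ v := by
  obtain ⟨hxs, hys, hr⟩ := hv hx hy hxy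
  have hvs : v ∉ {x, y} ∪ Gᶜ.neighborSet v := by simp [hx.ne, hy.ne]
  have hcycle := cycleGraph_isIndContained_of_reachable_induce hr hvs fun ⟨a, ha⟩ ↦ by
    rw [Subtype.mk.injEq, Subtype.mk.injEq]
    refine ⟨fun hva ↦ ha.resolve_right fun hva' ↦ hva'.2 hva, ?_⟩
    rintro (rfl | rfl) <;> assumption
  have hdist_lt := not_le.1 fun h ↦ hG _ h hcycle
  have hone_lt := hr.one_lt_dist_of_ne_of_not_adj (by simpa using hxy.1) (by simpa using hxy.2)
  obtain ⟨c, hxc, hcy⟩ := exists_adj_dist_add_one_eq hr (by simpa using hxy.1)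
  have hcy : (G.induce _).Adj c ⟨y, hys⟩ := dist_eq_one_iff_adj.1 (by lia)
  exact ⟨c, ⟨hxc, hcy.symm⟩, ne_of_mem_of_not_mem c.2 hvs⟩

lemma exists_isIsomSub_sdiff_singleton [Finite V] (hG : IsFourChordal G) {A : Set V}
    (hA : IsIsomSub G A) (hnt : A.Nontrivial) : ∃ v ∈ A, IsIsomSub G (A \ {v}) := by
  have := hnt.nonempty.to_subtype
  obtain ⟨v, hv⟩ := exists_isAvoidable (G.induce A)
  have hne : (A \ {(v : V)}).Nonempty := (hnt.exists_ne v).imp fun _ h ↦ h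
  exact ⟨v, v.2, hA.sdiff_singleton hne fun _ _ ↦ (hG.induce A).exists_mem_commonNeighbors hv⟩

end IsFourChordal

end

/-- Every finite simple connected graph with no induced cycle of length `5`
or greater (i.e. every `4`-chordal graph) is distance preserving. -/
theorem four_chordal_implies_dp {V : Type*} [Fintype V] (G : SimpleGraph V)
    (hG : G.Connected)
    (hchordal : ∀ n : ℕ, 5 ≤ n → ∀ s : Set V,
      IsEmpty ((G.induce s) ≃g cycleGraph n)) :
    DistPres G := by
  have hfour : IsFourChordal G := fun n hn h ↦ by
    obtain ⟨s, ⟨e⟩⟩ := isIndContained_iff_exists_iso_induce.1 h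
    exact (hchordal n hn s).false e.symm
  intro i hi hcard
  refine Nat.decreasingInduction' (P := fun k ↦ ∃ A : Set V, A.ncard = k ∧ IsIsomSub G A)
    (fun k _ hik ⟨A, hAk, hA⟩ ↦ ?_) hcard
    ⟨Set.univ, by rw [Set.ncard_univ, Nat.card_eq_fintype_card], isIsomSub_univ hG⟩
  have hnt : A.Nontrivial := (Set.one_lt_ncard_iff_nontrivial).1 (by lia)
  obtain ⟨v, hv, hAv⟩ := hfour.exists_isIsomSub_sdiff_singleton hA hnt
  exact ⟨A \ {v}, by rw [Set.ncard_sdiff_singleton_of_mem hv]; lia, hAv⟩
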